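/- arXiv:1708.05520 — 3 statements merged into one kernel-verified Lean document; each statement's English description precedes it below -/
import Mathlib

section
/- Gale–Ryser theorem: Let r : Fin n₁ → ℕ be a non-increasing integer vector and c : Fin n₂ → ℕ an integer vector. The pair (r, c) is bi-graphical if and only if S_{n₁}(r) = S_{n₂}(c) and r is dominated by the conjugate vector c', i.e. S_k(r) ≤ S_k(c') for all k = 1, …, n₁. -/
open Finset

/-- Degree of row vertex `i` in a bipartite graph given by biadjacency matrix `M`. -/
def degU {n₁ n₂ : ℕ} (M : Fin n₁ → Fin n₂ → Bool) (i : Fin n₁) : ℕ :=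
  (univ.filter fun j => M i j = true).card

/-- Degree of column vertex `j` in a bipartite graph given by biadjacency matrix `M`. -/
def degV {n₁ n₂ : ℕ} (M : Fin n₁ → Fin n₂ → Bool) (j : Fin n₂) : ℕ :=
  (univ.filter fun i => M i j = true).card

/-- `psum x k` = sum of the first `k` components of the vector `x`. -/
def psum {n : ℕ} (x : Fin n → ℕ) (k : ℕ) : ℕ :=
  ∑ i ∈ univ.filter (fun i : Fin n => (i : ℕ) < k), x i

/-- `conj x i` = the `i`-th component (1-based) of the conjugate vector of `x`:
the number of indices `j` with `x j ≥ i`. -/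
def conj {m : ℕ} (x : Fin m → ℕ) (i : ℕ) : ℕ :=
  (univ.filter fun j : Fin m => i ≤ x j).card

/-- The conjugate vector of `x`, taken with length `n`. -/
def conjVec (n : ℕ) {m : ℕ} (x : Fin m → ℕ) : Fin n → ℕ :=
  fun i => conj x ((i : ℕ) + 1)

/-- A pair `(r, c)` is bi-graphical if some biadjacency matrix realizes these
degrees exactly. -/
def BiGraphical {n₁ n₂ : ℕ} (r : Fin n₁ → ℕ) (c : Fin n₂ → ℕ) : Prop :=
  ∃ M : Fin n₁ → Fin n₂ → Bool, (∀ i, degU M i = r i) ∧ (∀ j, degV M j = c j)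

/-- `M` is a realization of the four-tuple `(rl, ru, cl, cu)`. -/
def IsRealization {n₁ n₂ : ℕ} (rl ru : Fin n₁ → ℕ) (cl cu : Fin n₂ → ℕ)
    (M : Fin n₁ → Fin n₂ → Bool) : Prop :=
  (∀ i, rl i ≤ degU M i ∧ degU M i ≤ ru i) ∧ (∀ j, cl j ≤ degV M j ∧ degV M j ≤ cu j)

/-- The four-tuple `(rl, ru, cl, cu)` is realizable. -/
def Realizable {n₁ n₂ : ℕ} (rl ru : Fin n₁ → ℕ) (cl cu : Fin n₂ → ℕ) : Prop :=
  ∃ M, IsRealization rl ru cl cu M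

/-- The number of edges of the bipartite graph given by `M`. -/
def edges {n₁ n₂ : ℕ} (M : Fin n₁ → Fin n₂ → Bool) : ℕ :=
  (univ.filter fun p : Fin n₁ × Fin n₂ => M p.1 p.2 = true).card

/-- `max (0, δ₁)` where `δ₁ = max over 1 ≤ j ≤ n₁ of (S_j(rl) - S_j(cl'))`
computed in the integers, `cl'` being the conjugate of `cl` of length `n₁`. -/
def delta1 {n₁ n₂ : ℕ} (rl : Fin n₁ → ℕ) (cl : Fin n₂ → ℕ) : ℕ :=
  (Finset.Icc 1 n₁).sup fun j =>
    ((psum rl j : ℤ) - (psum (conjVec n₁ cl) j : ℤ)).toNat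

/-!
Without any ordering of the rows, `(r, c)` is bi-graphical iff the totals agree and every set `I` of
rows satisfies `∑ i ∈ I, r i ≤ ∑ j, min (c j) #I`. Necessity is double counting, since column `j`
meets `I` in at most `min (c j) #I` rows. For sufficiency, join one row `a` to the `r a` columns of
largest demand and recurse. If some `I` violated the condition for the remaining demands `d`, then
either every chosen column has `d j ≥ #I`, and `I` violates the original condition, or every column
not chosen has `d j ≤ #I`, and `insert a I` violates it. For non-increasing `r` the set `I` of given
size with the largest row sum is an initial segment, and `∑ j, min (c j) k` is the `k`-th partial
sum of the conjugate vector.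
-/

section LargestDemand

variable {ι α : Type*} [DecidableEq ι]

theorem exists_subset_card_eq_forall_le [LinearOrder α] (f : ι → α) (s : Finset ι) {m : ℕ}
    (hm : m ≤ #s) : ∃ T ⊆ s, #T = m ∧ ∀ a ∈ T, ∀ b ∈ s \ T, f b ≤ f a := by
  induction m with
  | zero => exact ⟨∅, by simp⟩
  | succ m ih =>
    obtain ⟨T, hTs, hT, hle⟩ := ih (by lia)
    have hne : (s \ T).Nonempty := sdiff_nonempty_of_card_lt_card (by lia)
    obtain ⟨x, hx, hmax⟩ := exists_max_image (s \ T) f hne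
    obtain ⟨hxs, hxT⟩ := mem_sdiff.1 hx
    refine ⟨insert x T, insert_subset hxs hTs, by rw [card_insert_of_notMem hxT, hT], ?_⟩
    intro a ha b hb
    have hb' : b ∈ s \ T := sdiff_subset_sdiff Subset.rfl (subset_insert x T) hb
    rcases mem_insert.1 ha with rfl | ha
    · exact hmax b hb'
    · exact hle a ha b hb'

theorem exists_eq_add_indicator_of_le_card [Fintype ι] (c : ι → ℕ) {m : ℕ}
    (hm : m ≤ #{j | 1 ≤ c j}) :
    ∃ (T : Finset ι) (d : ι → ℕ), #T = m ∧ (∀ j, c j = d j + if j ∈ T then 1 else 0) ∧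
      ∀ t ∈ T, ∀ j ∉ T, d j ≤ d t + 1 := by
  obtain ⟨T, hTpos, hTcard, hTmax⟩ := exists_subset_card_eq_forall_le c _ hm
  have hpos : ∀ t ∈ T, 1 ≤ c t := fun t ht => (mem_filter.1 (hTpos ht)).2
  refine ⟨T, fun j => c j - if j ∈ T then 1 else 0, hTcard, fun j => ?_, fun t ht j hj => ?_⟩
  · have := hpos j
    grind
  · have := hTmax t ht j
    grind

theorem sum_add_indicator_eq_sum_add_card [Fintype ι] (f : ι → ℕ) (T : Finset ι) :
    ∑ j, (f j + if j ∈ T then 1 else 0) = ∑ j, f j + #T := by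
  simp [sum_add_distrib]

theorem le_sum_min_of_le_sum_min_add_indicator [Fintype ι] {d : ι → ℕ} {T : Finset ι} {p k : ℕ}
    (hT : ∀ a ∈ T, ∀ b ∉ T, d b ≤ d a + 1)
    (hk : p ≤ ∑ j, min (d j + if j ∈ T then 1 else 0) k)
    (hk' : p + #T ≤ ∑ j, min (d j + if j ∈ T then 1 else 0) (k + 1)) :
    p ≤ ∑ j, min (d j) k := by
  by_cases hlarge : ∀ t ∈ T, k ≤ d t
  · refine hk.trans (sum_le_sum fun j _ => ?_)
    split_ifs with hj
    · have := hlarge j hj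
      lia
    · rfl
  · push Not at hlarge
    obtain ⟨t, ht, hdt⟩ := hlarge
    have hsum : ∑ j, min (d j + if j ∈ T then 1 else 0) (k + 1) ≤ ∑ j, min (d j) k + #T := by
      rw [← sum_add_indicator_eq_sum_add_card]
      refine sum_le_sum fun j _ => ?_
      split_ifs with hj
      · lia
      · have := hT t ht j hj
        lia
    lia

end LargestDemand

theorem exists_finset_family_of_sum_le {ι β : Type*} [Fintype β] [DecidableEq β]
    (s : Finset ι) (r : ι → ℕ) (c : β → ℕ) (hsum : ∑ i ∈ s, r i = ∑ j, c j)
    (hle : ∀ I ⊆ s, ∑ i ∈ I, r i ≤ ∑ j, min (c j) #I) :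
    ∃ A : ι → Finset β, (∀ i ∈ s, #(A i) = r i) ∧ ∀ j, #{i ∈ s | j ∈ A i} = c j := by
  classical
  induction s using Finset.induction_on generalizing c with
  | empty => exact ⟨fun _ => ∅, by simp, by simpa [eq_comm] using hsum⟩
  | insert a s ha ih =>
    have hra : r a ≤ #{j | 1 ≤ c j} := by
      have hmin (j : β) : min (c j) 1 = if 1 ≤ c j then 1 else 0 := by split_ifs <;> lia
      simpa [hmin] using hle {a} (by simp)
    obtain ⟨T, d, hTcard, hc, hTd⟩ := exists_eq_add_indicator_of_le_card c hra
    simp only [hc] at hsum hle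
    have hsum' : ∑ i ∈ s, r i = ∑ j, d j := by
      rw [sum_insert ha, sum_add_indicator_eq_sum_add_card] at hsum
      lia
    have hle' : ∀ I ⊆ s, ∑ i ∈ I, r i ≤ ∑ j, min (d j) #I := fun I hI => by
      have haI : a ∉ I := fun h => ha (hI h)
      have hinsert := hle (insert a I) (insert_subset_insert a hI)
      rw [sum_insert haI, card_insert_of_notMem haI, add_comm, ← hTcard] at hinsert
      exact le_sum_min_of_le_sum_min_add_indicator hTd
        (hle I (hI.trans (subset_insert a s))) hinsert
    obtain ⟨A, hAr, hAd⟩ := ih d hsum' hle'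
    have hupdate : ∀ i ∈ s, Function.update A a T i = A i := fun i hi =>
      Function.update_of_ne (ne_of_mem_of_not_mem hi ha) T A
    refine ⟨Function.update A a T, ?_, fun j => ?_⟩
    · rw [forall_mem_insert]
      exact ⟨by simp [hTcard], fun i hi => by rw [hupdate i hi, hAr i hi]⟩
    · have hs : {i ∈ s | j ∈ Function.update A a T i} = {i ∈ s | j ∈ A i} :=
        filter_congr fun i hi => by rw [hupdate i hi]
      rw [hc, ← hAd, filter_insert, Function.update_self, hs]
      split_ifs with hj
      · rw [card_insert_of_notMem (by simp [ha])]
      · rfl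

section Degrees

variable {n₁ n₂ : ℕ} (M : Fin n₁ → Fin n₂ → Bool)

theorem sum_degU_eq_sum_card (I : Finset (Fin n₁)) :
    ∑ i ∈ I, degU M i = ∑ j, #{i ∈ I | M i j = true} :=
  sum_card_bipartiteAbove_eq_sum_card_bipartiteBelow fun i j => M i j = true

theorem sum_degU_eq_sum_degV : ∑ i, degU M i = ∑ j, degV M j :=
  sum_degU_eq_sum_card M univ

theorem sum_degU_le_sum_min_degV (I : Finset (Fin n₁)) :
    ∑ i ∈ I, degU M i ≤ ∑ j, min (degV M j) #I := by
  rw [sum_degU_eq_sum_card]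
  exact sum_le_sum fun j _ =>
    le_min (card_le_card (filter_subset_filter _ (subset_univ I))) (card_filter_le I _)

end Degrees

theorem biGraphical_iff_forall_sum_le {n₁ n₂ : ℕ} (r : Fin n₁ → ℕ) (c : Fin n₂ → ℕ) :
    BiGraphical r c ↔
      ∑ i, r i = ∑ j, c j ∧ ∀ I : Finset (Fin n₁), ∑ i ∈ I, r i ≤ ∑ j, min (c j) #I := by
  constructor
  · rintro ⟨M, hU, hV⟩
    obtain rfl : degU M = r := funext hU
    obtain rfl : degV M = c := funext hV
    exact ⟨sum_degU_eq_sum_degV M, sum_degU_le_sum_min_degV M⟩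
  · rintro ⟨hsum, hle⟩
    obtain ⟨A, hr, hc⟩ := exists_finset_family_of_sum_le univ r c hsum fun I _ => hle I
    exact ⟨fun i j => decide (j ∈ A i), by simpa [degU] using hr, by simpa [degV] using hc⟩

section PartialSums

variable {n : ℕ}

theorem psum_self (x : Fin n → ℕ) : psum x n = ∑ i, x i := by
  simp [psum]

theorem psum_succ (x : Fin n → ℕ) {k : ℕ} (hk : k < n) :
    psum x (k + 1) = psum x k + x ⟨k, hk⟩ := by
  have hinsert : ({i | (i : ℕ) < k + 1} : Finset (Fin n)) =
      insert ⟨k, hk⟩ ({i | (i : ℕ) < k} : Finset (Fin n)) := by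
    grind
  rw [psum, hinsert, sum_insert (by simp), add_comm, psum]

theorem sum_le_psum_card {r : Fin n → ℕ} (hr : Antitone r) (I : Finset (Fin n)) :
    ∑ i ∈ I, r i ≤ psum r #I := by
  induction I using Finset.induction_on_max with
  | empty => simp
  | insert a s hs ih =>
    have ha : a ∉ s := fun h => (hs a h).false
    have hcard : #s ≤ (a : ℕ) := by
      simpa using card_le_card fun x hx => mem_Iio.2 (hs x hx)
    rw [sum_insert ha, card_insert_of_notMem ha, psum_succ r (hcard.trans_lt a.isLt), add_comm]
    exact add_le_add ih (hr hcard)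

theorem psum_conjVec {m : ℕ} (c : Fin m → ℕ) {k : ℕ} (hk : k ≤ n) :
    psum (conjVec n c) k = ∑ j, min (c j) k := by
  have hcount (j : Fin m) : #{i : Fin n | (i : ℕ) < k ∧ (i : ℕ) + 1 ≤ c j} = min (c j) k := by
    simp only [Nat.add_one_le_iff, ← lt_min_iff, Fin.card_filter_val_lt]
    lia
  simp only [psum, conjVec, conj, ← hcount, ← filter_filter]
  exact sum_card_bipartiteAbove_eq_sum_card_bipartiteBelow
    fun (i : Fin n) j => (i : ℕ) + 1 ≤ c j

theorem forall_sum_le_sum_min_iff {m : ℕ} {r : Fin n → ℕ} (hr : Antitone r) (c : Fin m → ℕ) :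
    (∀ I : Finset (Fin n), ∑ i ∈ I, r i ≤ ∑ j, min (c j) #I) ↔
      ∀ k, 1 ≤ k → k ≤ n → psum r k ≤ psum (conjVec n c) k := by
  constructor
  · intro h k _ hk
    rw [psum_conjVec c hk]
    simpa [psum, Fin.card_filter_val_lt, hk] using h {i | (i : ℕ) < k}
  · intro h I
    rcases I.eq_empty_or_nonempty with rfl | hI
    · simp
    · have hIn : #I ≤ n := card_finset_fin_le I
      calc ∑ i ∈ I, r i ≤ psum r #I := sum_le_psum_card hr I
        _ ≤ psum (conjVec n c) #I := h _ hI.card_pos hIn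
        _ = ∑ j, min (c j) #I := psum_conjVec c hIn

end PartialSums

/-- Gale–Ryser theorem. -/
theorem gale_ryser {n₁ n₂ : ℕ} (r : Fin n₁ → ℕ) (c : Fin n₂ → ℕ)
    (hr : Antitone r) :
    BiGraphical r c ↔
      psum r n₁ = psum c n₂ ∧
        ∀ k, 1 ≤ k → k ≤ n₁ → psum r k ≤ psum (conjVec n₁ c) k := by
  rw [biGraphical_iff_forall_sum_le, forall_sum_le_sum_min_iff hr, psum_self, psum_self]
end

section
/- Fulkerson–Schocker theorem: Let r̲ : Fin n₁ → ℕ and c̲ : Fin n₂ → ℕ be non-increasing integer vectors, and let r̄ : Fin n₁ → ℕ and c̄ : Fin n₂ → ℕ be integer vectors with r̲ ≤ r̄ and c̲ ≤ c̄ componentwise. The four-tuple (r̲, r̄, c̲, c̄) is realizable if and only if S_k(r̲) ≤ S_k(c̄') for all k = 1, …, n₁ and S_k(c̲) ≤ S_k(r̄') for all k = 1, …, n₂, where c̄' is the conjugate vector of c̄ of length n₁ and r̄' is the conjugate vector of r̄ of length n₂. -/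
open Finset

/-!
The lower row bounds with the upper column bounds, and the lower column bounds with the upper row
bounds, can be treated separately, as in the Mendelsohn–Dulmage theorem. Suppose `M` has row
degrees at least `rl` and column degrees at most `cu`, while `N` has column degrees at least `cl`
and row degrees at most `ru`. If a row of `M` exceeds its upper bound, then it contains an edge that
is not in `N`, and deleting it respects the two bounds imposed on `M`; if a column of `M` is below
its lower bound, then `N` has an edge in it to add. Both moves bring `M` closer to `N`, so an `M`
at minimal Hamming distance from `N` is a realization.

Each half is a one-sided Gale–Ryser theorem. The Ferrers matrix of `c` has the conjugate of `c` as
its row degrees, and these majorize the row degrees of every matrix with column degrees `c`.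
Conversely, following Krause, start from the Ferrers matrix. As long as some row is below its lower
bound, the majorization yields an earlier row above its own; since the lower bounds are
non-increasing, the earlier row has larger degree, so some column allows an edge to be moved from it
to the deficient row, which preserves the column degrees.
-/

variable {n n₁ n₂ : ℕ}

section Vectors

variable {ι : Type*} [DecidableEq ι] {x y : ι → ℕ}

theorem add_single_one_le (h : x ≤ y) {i : ι} (hi : x i < y i) : x + Pi.single i 1 ≤ y := by
  intro a
  by_cases ha : a = i
  · subst ha
    simpa using Nat.succ_le_of_lt hi
  · simpa [ha] using h a

theorem sum_tsub_lt_of_transfer [Fintype ι] {z : ι → ℕ} {i k : ι}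
    (htransfer : z + Pi.single i 1 = y + Pi.single k 1) (hi : x i < y i) (hk : y k < x k) :
    ∑ a, (x a - z a) < ∑ a, (x a - y a) := by
  have hz (a : ι) : z a + (if a = i then 1 else 0) = y a + if a = k then 1 else 0 := by
    simpa [Pi.single_apply] using congrFun htransfer a
  refine sum_lt_sum (fun a _ => ?_) ⟨k, mem_univ k, ?_⟩
  · grind
  · grind

end Vectors

section Entries

variable {α β γ : Type*} [DecidableEq α] [DecidableEq β]

/-- The matrix `M` with its entry at `(i, j)` replaced by `b`. For a biadjacency matrix this adds
or deletes an edge. -/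
def setEntry (M : α → β → γ) (i : α) (j : β) (b : γ) : α → β → γ :=
  Function.update M i (Function.update (M i) j b)

theorem setEntry_apply (M : α → β → γ) (i a : α) (j c : β) (b : γ) :
    setEntry M i j b a c = if a = i ∧ c = j then b else M a c := by
  by_cases ha : a = i
  · subst ha
    simp [setEntry, Function.update_apply]
  · simp [setEntry, ha]

theorem flip_setEntry (M : α → β → γ) (i : α) (j : β) (b : γ) :
    flip (setEntry M i j b) = setEntry (flip M) j i b := by
  ext c a
  simp [flip, setEntry_apply, and_comm]

theorem setEntry_setEntry_of_eq {M : α → β → γ} {i : α} {j : β} {b b' : γ} (h : M i j = b) :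
    setEntry (setEntry M i j b') i j b = M := by
  simp [setEntry, ← h]

theorem hammingDist_setEntry_lt [Fintype α] [Fintype β] [DecidableEq γ] {M N : α → β → γ} {i : α}
    {j : β} (h : M i j ≠ N i j) :
    hammingDist (setEntry M i j (N i j)).uncurry N.uncurry <
      hammingDist M.uncurry N.uncurry := by
  refine card_lt_card ((ssubset_iff_of_subset ?_).2 ⟨(i, j), ?_⟩)
  · rintro ⟨a, c⟩
    simp only [mem_filter_univ, Function.uncurry_apply_pair, setEntry_apply]
    split_ifs with hac
    · simp [hac]
    · exact id
  · simpa [setEntry_apply] using h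

end Entries

section PartialSums

variable {x y : Fin n → ℕ}

theorem psum_add (x y : Fin n → ℕ) (k : ℕ) : psum (x + y) k = psum x k + psum y k :=
  sum_add_distrib

theorem psum_mono (h : x ≤ y) (k : ℕ) : psum x k ≤ psum y k :=
  sum_le_sum fun i _ => h i

theorem psum_single_one (i : Fin n) (k : ℕ) :
    psum (Pi.single i 1) k = if (i : ℕ) < k then 1 else 0 := by
  simp [psum]

theorem psum_val_succ (x : Fin n → ℕ) (k : Fin n) : psum x (k + 1) = psum x k + x k := by
  have hinsert : univ.filter (fun i : Fin n => (i : ℕ) < k + 1) =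
      insert k (univ.filter fun i : Fin n => (i : ℕ) < k) := by
    ext i
    simp only [mem_filter_univ, mem_insert, Fin.ext_iff]
    omega
  rw [psum, hinsert, sum_insert (by simp), add_comm, psum]

/-- Weak majorization of `x` by `y`, except that the vectors are compared in the given order
instead of being sorted first. -/
def WeaklyMajorizedBy (x y : Fin n → ℕ) : Prop :=
  ∀ k, 1 ≤ k → k ≤ n → psum x k ≤ psum y k

theorem WeaklyMajorizedBy.exists_surplus_lt_deficit (h : WeaklyMajorizedBy x y)
    (hxy : ¬ x ≤ y) :
    ∃ i k : Fin n, i < k ∧ x i < y i ∧ y k < x k ∧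
      ∀ l : ℕ, (i : ℕ) < l → l ≤ k → psum x l < psum y l := by
  -- Before the first deficit every row contributes nonnegatively to `psum y - psum x`, so this
  -- difference stays positive from the surplus on.
  obtain ⟨k, hk, hfirst⟩ : ∃ k, y k < x k ∧ ∀ i < k, x i ≤ y i := by
    simp only [Pi.le_def, not_forall, not_le] at hxy
    obtain ⟨k, hk, hmin⟩ := WellFounded.has_min wellFounded_lt {k | y k < x k} hxy
    exact ⟨k, hk, fun i hi => not_lt.1 fun hlt => hmin i hlt hi⟩
  have hsum : psum x k < psum y k := by
    have := h (k + 1) (by omega) (by omega)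
    simp only [psum_val_succ] at this
    omega
  obtain ⟨i, hik, hi⟩ := exists_lt_of_sum_lt hsum
  refine ⟨i, k, (mem_filter.1 hik).2, hi, hk, fun l hil hlk => ?_⟩
  refine sum_lt_sum (fun a ha => hfirst a ?_) ⟨i, by simpa using hil, hi⟩
  exact (mem_filter.1 ha).2.trans_le hlk

theorem WeaklyMajorizedBy.of_transfer {z : Fin n → ℕ} {i k : Fin n}
    (h : WeaklyMajorizedBy x y) (htransfer : z + Pi.single i 1 = y + Pi.single k 1)
    (hstrict : ∀ l : ℕ, (i : ℕ) < l → l ≤ k → psum x l < psum y l) :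
    WeaklyMajorizedBy x z := by
  intro l hl hln
  have hz := congrArg (psum · l) htransfer
  simp only [psum_add, psum_single_one] at hz
  have hle := h l hl hln
  have hlt := hstrict l
  split_ifs at hz <;> omega

end PartialSums

section Degrees

variable {M N : Fin n₁ → Fin n₂ → Bool}

theorem degU_flip (M : Fin n₁ → Fin n₂ → Bool) : degU (flip M) = degV M := rfl

theorem psum_degU (M : Fin n₁ → Fin n₂ → Bool) (k : ℕ) :
    psum (degU M) k = ∑ j, #{i : Fin n₁ | (i : ℕ) < k ∧ M i j} := by
  simp_rw [← filter_filter]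
  exact sum_card_bipartiteAbove_eq_sum_card_bipartiteBelow fun i j => M i j = true

theorem exists_entry_of_degU_lt {i i' : Fin n₁} (h : degU M i < degU N i') :
    ∃ j, M i j = false ∧ N i' j = true := by
  obtain ⟨j, hN, hM⟩ := exists_mem_notMem_of_card_lt_card h
  exact ⟨j, by simpa using hM, by simpa using hN⟩

theorem exists_entry_of_degV_lt {j j' : Fin n₂} (h : degV M j < degV N j') :
    ∃ i, M i j = false ∧ N i j' = true :=
  exists_entry_of_degU_lt (M := flip M) (N := flip N) h

theorem degU_setEntry_true {i : Fin n₁} {j : Fin n₂} (h : M i j = false) :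
    degU (setEntry M i j true) = degU M + Pi.single i 1 := by
  ext a
  by_cases ha : a = i
  · subst ha
    have hinsert : univ.filter (fun c => setEntry M a j true a c = true) =
        insert j (univ.filter fun c => M a c = true) := by
      ext c
      simp [setEntry_apply, or_iff_not_imp_left]
    simp [degU, hinsert, h]
  · simp [degU, setEntry_apply, ha]

theorem degV_setEntry_true {i : Fin n₁} {j : Fin n₂} (h : M i j = false) :
    degV (setEntry M i j true) = degV M + Pi.single j 1 := by
  rw [← degU_flip, flip_setEntry, degU_setEntry_true (M := flip M) h, degU_flip]

theorem degU_setEntry_false {i : Fin n₁} {j : Fin n₂} (h : M i j = true) :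
    degU (setEntry M i j false) + Pi.single i 1 = degU M := by
  rw [← degU_setEntry_true (j := j) (by simp [setEntry_apply]), setEntry_setEntry_of_eq h]

theorem degV_setEntry_false {i : Fin n₁} {j : Fin n₂} (h : M i j = true) :
    degV (setEntry M i j false) + Pi.single j 1 = degV M := by
  rw [← degV_setEntry_true (i := i) (by simp [setEntry_apply]), setEntry_setEntry_of_eq h]

theorem exists_degU_transfer {i k : Fin n₁} (h : degU M k < degU M i) :
    ∃ N, degV N = degV M ∧ degU N + Pi.single i 1 = degU M + Pi.single k 1 := by
  obtain ⟨j, hk, hi⟩ := exists_entry_of_degU_lt h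
  have hki : k ≠ i := by
    rintro rfl
    exact h.false
  have hk' : setEntry M i j false k j = false := by simp [setEntry_apply, hki, hk]
  refine ⟨setEntry (setEntry M i j false) k j true, ?_, ?_⟩
  · rw [degV_setEntry_true hk', degV_setEntry_false hi]
  · rw [degU_setEntry_true hk', add_right_comm, degU_setEntry_false hi]

end Degrees

/-- The Ferrers matrix of `c`: column `j` consists of `c j` ones followed by zeros (of ones only
if `n < c j`). -/
def ferrers (n : ℕ) (c : Fin n₂ → ℕ) : Fin n → Fin n₂ → Bool :=
  fun i j => decide ((i : ℕ) < c j)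

theorem ferrers_eq_true_iff {c : Fin n₂ → ℕ} {i : Fin n} {j : Fin n₂} :
    ferrers n c i j = true ↔ (i : ℕ) < c j :=
  decide_eq_true_iff

theorem degU_ferrers (c : Fin n₂ → ℕ) : degU (ferrers n c) = conjVec n c := by
  ext i
  simp [degU, ferrers_eq_true_iff, conjVec, conj]

theorem degV_ferrers_le (c : Fin n₂ → ℕ) : degV (ferrers n c) ≤ c := by
  intro j
  simp [degV, ferrers_eq_true_iff, Fin.card_filter_val_lt]

theorem conjVec_mono {c c' : Fin n₂ → ℕ} (h : c ≤ c') : conjVec n c ≤ conjVec n c' :=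
  fun _ => card_le_card <| monotone_filter_right univ fun j _ hj => le_trans hj (h j)

theorem card_filter_val_lt_le (A : Finset (Fin n)) (k : ℕ) :
    #(A.filter fun i : Fin n => (i : ℕ) < k) ≤ #{i : Fin n | (i : ℕ) < k ∧ (i : ℕ) < #A} := by
  simp_rw [← lt_min_iff, Fin.card_filter_val_lt]
  have hA : #(A.filter fun i : Fin n => (i : ℕ) < k) ≤ #A := card_filter_le _ _
  have hk : #(A.filter fun i : Fin n => (i : ℕ) < k) ≤ #{i : Fin n | (i : ℕ) < k} :=
    card_le_card <| filter_subset_filter _ <| subset_univ A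
  rw [Fin.card_filter_val_lt] at hk
  omega

theorem psum_degU_le_psum_conjVec_degV (M : Fin n₁ → Fin n₂ → Bool) (k : ℕ) :
    psum (degU M) k ≤ psum (conjVec n₁ (degV M)) k := by
  rw [← degU_ferrers, psum_degU, psum_degU]
  refine sum_le_sum fun j _ => ?_
  simpa [ferrers_eq_true_iff, degV, filter_filter, and_comm] using
    card_filter_val_lt_le (univ.filter fun i => M i j = true) k

/-- One half of realizability: the row degrees are bounded below by `r`, the column degrees
above by `c`. -/
def HalfRealizable (r : Fin n₁ → ℕ) (c : Fin n₂ → ℕ) : Prop :=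
  ∃ M : Fin n₁ → Fin n₂ → Bool, r ≤ degU M ∧ degV M ≤ c

theorem HalfRealizable.weaklyMajorizedBy {r : Fin n₁ → ℕ} {c : Fin n₂ → ℕ}
    (h : HalfRealizable r c) : WeaklyMajorizedBy r (conjVec n₁ c) := by
  obtain ⟨M, hr, hc⟩ := h
  intro k _ _
  calc psum r k ≤ psum (degU M) k := psum_mono hr k
    _ ≤ psum (conjVec n₁ (degV M)) k := psum_degU_le_psum_conjVec_degV M k
    _ ≤ psum (conjVec n₁ c) k := psum_mono (conjVec_mono hc) k

theorem WeaklyMajorizedBy.halfRealizable {r : Fin n₁ → ℕ} {c : Fin n₂ → ℕ} (hr : Antitone r)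
    (h : WeaklyMajorizedBy r (conjVec n₁ c)) : HalfRealizable r c := by
  let s : Set (Fin n₁ → Fin n₂ → Bool) := {M | degV M ≤ c ∧ WeaklyMajorizedBy r (degU M)}
  have hs : s.Nonempty := ⟨ferrers n₁ c, degV_ferrers_le c, by rwa [degU_ferrers]⟩
  obtain ⟨M, ⟨hMc, hMr⟩, hmin⟩ :=
    s.exists_min_image (fun M => ∑ i, (r i - degU M i)) s.toFinite hs
  refine ⟨M, ?_, hMc⟩
  by_contra hdeficit
  obtain ⟨i, k, hik, hi, hk, hstrict⟩ := hMr.exists_surplus_lt_deficit hdeficit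
  obtain ⟨N, hNV, hNU⟩ := exists_degU_transfer ((hk.trans_le (hr hik.le)).trans hi)
  have hNs : N ∈ s := ⟨hNV.trans_le hMc, hMr.of_transfer hNU hstrict⟩
  exact (sum_tsub_lt_of_transfer hNU hi hk).not_ge (hmin N hNs)

theorem halfRealizable_iff_weaklyMajorizedBy {r : Fin n₁ → ℕ} (hr : Antitone r)
    (c : Fin n₂ → ℕ) : HalfRealizable r c ↔ WeaklyMajorizedBy r (conjVec n₁ c) :=
  ⟨HalfRealizable.weaklyMajorizedBy, WeaklyMajorizedBy.halfRealizable hr⟩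

theorem HalfRealizable.realizable {rl ru : Fin n₁ → ℕ} {cl cu : Fin n₂ → ℕ} (hr : rl ≤ ru)
    (hc : cl ≤ cu) (hrow : HalfRealizable rl cu) (hcol : HalfRealizable cl ru) :
    Realizable rl ru cl cu := by
  obtain ⟨N, hNV, hNU⟩ : ∃ N : Fin n₁ → Fin n₂ → Bool, cl ≤ degV N ∧ degU N ≤ ru :=
    let ⟨N, hN⟩ := hcol
    ⟨flip N, hN⟩
  let s : Set (Fin n₁ → Fin n₂ → Bool) := {M | rl ≤ degU M ∧ degV M ≤ cu}
  obtain ⟨M, ⟨hMU, hMV⟩, hmin⟩ :=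
    s.exists_min_image (fun M => hammingDist M.uncurry N.uncurry) s.toFinite hrow
  have hclosest {i : Fin n₁} {j : Fin n₂} (hij : M i j ≠ N i j) : setEntry M i j (N i j) ∉ s :=
    fun hmem => (hammingDist_setEntry_lt hij).not_ge (hmin _ hmem)
  refine ⟨M, fun i => ⟨hMU i, not_lt.1 fun hexcess => ?_⟩,
    fun j => ⟨not_lt.1 fun hdeficit => ?_, hMV j⟩⟩
  · obtain ⟨j, hN, hM⟩ := exists_entry_of_degU_lt ((hNU i).trans_lt hexcess)
    have hU := degU_setEntry_false hM
    have hV := degV_setEntry_false hM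
    refine hclosest (i := i) (j := j) (by simp [hM, hN]) (hN ▸ ⟨?_, ?_⟩)
    · refine le_of_add_le_add_right (a := Pi.single i 1) ?_
      exact (add_single_one_le hMU ((hr i).trans_lt hexcess)).trans_eq hU.symm
    · exact (le_self_add.trans_eq hV).trans hMV
  · obtain ⟨i, hM, hN⟩ := exists_entry_of_degV_lt (hdeficit.trans_le (hNV j))
    refine hclosest (i := i) (j := j) (by simp [hM, hN]) (hN ▸ ⟨?_, ?_⟩)
    · exact hMU.trans (le_self_add.trans_eq (degU_setEntry_true hM).symm)
    · rw [degV_setEntry_true hM]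
      exact add_single_one_le hMV (hdeficit.trans_le (hc j))

theorem realizable_iff_halfRealizable {rl ru : Fin n₁ → ℕ} {cl cu : Fin n₂ → ℕ} (hr : rl ≤ ru)
    (hc : cl ≤ cu) :
    Realizable rl ru cl cu ↔ HalfRealizable rl cu ∧ HalfRealizable cl ru := by
  refine ⟨fun ⟨M, hU, hV⟩ => ⟨⟨M, ?_, ?_⟩, flip M, ?_, ?_⟩, fun h => h.1.realizable hr hc h.2⟩
  · exact fun i => (hU i).1
  · exact fun j => (hV j).2
  · exact fun j => (hV j).1
  · exact fun i => (hU i).2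

/-- Fulkerson–Schocker theorem. -/
theorem fulkerson_schocker {n₁ n₂ : ℕ} (rl ru : Fin n₁ → ℕ) (cl cu : Fin n₂ → ℕ)
    (hrl : Antitone rl) (hcl : Antitone cl) (hr : rl ≤ ru) (hc : cl ≤ cu) :
    Realizable rl ru cl cu ↔
      (∀ k, 1 ≤ k → k ≤ n₁ → psum rl k ≤ psum (conjVec n₁ cu) k) ∧
      (∀ k, 1 ≤ k → k ≤ n₂ → psum cl k ≤ psum (conjVec n₂ ru) k) := by
  rw [realizable_iff_halfRealizable hr hc, halfRealizable_iff_weaklyMajorizedBy hrl,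
    halfRealizable_iff_weaklyMajorizedBy hcl]
  rfl
end

section
/- Let r̲ : Fin n₁ → ℕ and c : Fin n₂ → ℕ be non-increasing integer vectors and r̄ : Fin n₁ → ℕ, c̄ : Fin n₂ → ℕ integer vectors with r̲ ≤ r̄ and c ≤ c̄ componentwise, such that the four-tuple (r̲, r̄, c, c̄) is realizable but (r̲, r̄, c, c) is not realizable. Then there exists a right-most position i with c i < c̄ i. Let j be the left-most position with c j = c i, and define vectors a and ā by: a k = c k + 1 if k = j and a k = c k otherwise; ā j = c̄ i, ā i = c̄ j, and ā k = c̄ k for all k ≠ i, j. Then a is non-increasing, a ≤ ā componentwise, and the four-tuple (r̲, r̄, a, ā) is realizable. -/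
open Finset

/-!
Let `i` be the right-most column with slack `c i < cu i`, and `j` the left-most column with
`c j = c i`. The lower bounds at `i` and `j` agree, so exchanging these two columns of a realization
moves the slack from `i` to `j`, where `c` can be raised without losing monotonicity. If a
realization has degree exactly `c j` at `j`, some other column `k` has degree above `c k`, since `c`
itself is not realizable. As `c j` is minimal among the columns with slack, `k` has larger degree
than `j`, so within some row an edge can be moved from `k` to `j`.
-/

variable {n₁ n₂ : ℕ}

section Degrees

variable {M N : Fin n₁ → Fin n₂ → Bool}

lemma degU_eq_sum_toNat (M : Fin n₁ → Fin n₂ → Bool) (u : Fin n₁) :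
    degU M u = ∑ v, (M u v).toNat := by
  simp only [degU, card_filter, Bool.toNat, Bool.cond_eq_ite]

lemma degV_eq_sum_toNat (M : Fin n₁ → Fin n₂ → Bool) (v : Fin n₂) :
    degV M v = ∑ u, (M u v).toNat := by
  simp only [degV, card_filter, Bool.toNat, Bool.cond_eq_ite]

lemma degU_eq_of_row_eq_comp_perm {u : Fin n₁} (σ : Equiv.Perm (Fin n₂))
    (h : N u = M u ∘ σ) : degU N u = degU M u := by
  simp only [degU_eq_sum_toNat, h, Function.comp_apply]
  exact Equiv.sum_comp σ fun v => (M u v).toNat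

lemma degU_update_comp_perm (M : Fin n₁ → Fin n₂ → Bool) (u w : Fin n₁)
    (σ : Equiv.Perm (Fin n₂)) : degU (Function.update M u (M u ∘ σ)) w = degU M w := by
  obtain rfl | hw := eq_or_ne w u
  · exact degU_eq_of_row_eq_comp_perm σ (Function.update_self ..)
  · exact degU_eq_of_row_eq_comp_perm 1 (Function.update_of_ne hw ..)

-- Adding the old entry on the left avoids truncated subtraction.
lemma degV_update_add (M : Fin n₁ → Fin n₂ → Bool) (u : Fin n₁) (x : Fin n₂ → Bool)
    (v : Fin n₂) :
    degV (Function.update M u x) v + (M u v).toNat = degV M v + (x v).toNat := by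
  have off_row : ∑ w ∈ univ.erase u, (Function.update M u x w v).toNat =
      ∑ w ∈ univ.erase u, (M w v).toNat :=
    sum_congr rfl fun w hw => by rw [Function.update_of_ne (ne_of_mem_erase hw)]
  rw [degV_eq_sum_toNat, degV_eq_sum_toNat, ← add_sum_erase _ _ (mem_univ u),
    ← add_sum_erase _ _ (mem_univ u), off_row, Function.update_self]
  ring

lemma exists_row_of_degV_lt {j k : Fin n₂} (h : degV M j < degV M k) :
    ∃ u, M u j = false ∧ M u k = true := by
  obtain ⟨u, huk, huj⟩ := exists_mem_notMem_of_card_lt_card h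
  exact ⟨u, by simpa using huj, by simpa using huk⟩

lemma exists_move_edge {j k : Fin n₂} (h : degV M j < degV M k) :
    ∃ N : Fin n₁ → Fin n₂ → Bool, (∀ u, degU N u = degU M u) ∧
      degV N j = degV M j + 1 ∧ degV N k + 1 = degV M k ∧
      ∀ v, v ≠ j → v ≠ k → degV N v = degV M v := by
  obtain ⟨u, huj, huk⟩ := exists_row_of_degV_lt h
  have hdeg := degV_update_add M u (M u ∘ Equiv.swap j k)
  refine ⟨Function.update M u (M u ∘ Equiv.swap j k),
    fun w => degU_update_comp_perm M u w _, ?_, ?_, fun v hvj hvk => ?_⟩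
  · simpa [huj, huk] using hdeg j
  · simpa [huj, huk] using hdeg k
  · simpa [Equiv.swap_apply_of_ne_of_ne hvj hvk] using hdeg v

end Degrees

section Realizations

variable {rl ru : Fin n₁ → ℕ} {c d : Fin n₂ → ℕ}

lemma Realizable.le (h : Realizable rl ru c d) : c ≤ d := by
  obtain ⟨M, -, hV⟩ := h
  exact fun v => (hV v).1.trans (hV v).2

lemma Realizable.comp_perm (h : Realizable rl ru c d) (σ : Equiv.Perm (Fin n₂)) :
    Realizable rl ru (c ∘ σ) (d ∘ σ) := by
  obtain ⟨M, hU, hV⟩ := h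
  refine ⟨fun u => M u ∘ σ, fun u => ?_, fun v => hV (σ v)⟩
  rw [degU_eq_of_row_eq_comp_perm (M := M) σ rfl]
  exact hU u

variable {M : Fin n₁ → Fin n₂ → Bool}

lemma IsRealization.exists_lt_degV (hM : IsRealization rl ru c d M)
    (hnot : ¬ Realizable rl ru c c) : ∃ k, c k < degV M k := by
  by_contra! hle
  exact hnot ⟨M, hM.1, fun k => ⟨(hM.2 k).1, hle k⟩⟩

lemma Realizable.exists_lt (h : Realizable rl ru c d) (hnot : ¬ Realizable rl ru c c) :
    ∃ k, c k < d k := by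
  obtain ⟨M, hM⟩ := h
  obtain ⟨k, hk⟩ := hM.exists_lt_degV hnot
  exact ⟨k, hk.trans_le (hM.2 k).2⟩

lemma IsRealization.exists_degV_eq_add_one {j k : Fin n₂} (hM : IsRealization rl ru c d M)
    (hj : degV M j < d j) (hk : c k < degV M k) (hjk : degV M j < degV M k) :
    ∃ N, IsRealization rl ru c d N ∧ degV N j = degV M j + 1 := by
  obtain ⟨N, hNU, hNj, hNk, hN⟩ := exists_move_edge hjk
  refine ⟨N, ⟨fun u => hNU u ▸ hM.1 u, fun v => ?_⟩, hNj⟩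
  have hv := hM.2 v
  obtain rfl | hvj := eq_or_ne v j
  · lia
  obtain rfl | hvk := eq_or_ne v k
  · lia
  exact hN v hvj hvk ▸ hv

lemma Realizable.exists_isRealization_lt_degV (h : Realizable rl ru c d)
    (hnot : ¬ Realizable rl ru c c) {j : Fin n₂} (hj : c j < d j)
    (hmin : ∀ k, c k < d k → c j ≤ c k) :
    ∃ M, IsRealization rl ru c d M ∧ c j < degV M j := by
  obtain ⟨M, hM⟩ := h
  obtain hlt | heq := (hM.2 j).1.lt_or_eq
  · exact ⟨M, hM, hlt⟩
  obtain ⟨k, hk⟩ := hM.exists_lt_degV hnot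
  have hjk : c j ≤ c k := hmin k (hk.trans_le (hM.2 k).2)
  obtain ⟨N, hN, hNj⟩ := hM.exists_degV_eq_add_one (heq ▸ hj) hk (heq ▸ hjk.trans_lt hk)
  exact ⟨N, hN, by lia⟩

lemma Realizable.update_add_one (h : Realizable rl ru c d)
    (hnot : ¬ Realizable rl ru c c) {j : Fin n₂} (hj : c j < d j)
    (hmin : ∀ k, c k < d k → c j ≤ c k) :
    Realizable rl ru (Function.update c j (c j + 1)) d := by
  obtain ⟨M, hM, hMj⟩ := h.exists_isRealization_lt_degV hnot hj hmin
  have hle : Function.update c j (c j + 1) ≤ degV M :=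
    update_le_iff.mpr ⟨hMj, fun v _ => (hM.2 v).1⟩
  exact ⟨M, hM.1, fun v => ⟨hle v, (hM.2 v).2⟩⟩

lemma Realizable.increment_swap (h : Realizable rl ru c d) (hc : Antitone c)
    (hnot : ¬ Realizable rl ru c c) {i j : Fin n₂} (hi : c i < d i)
    (hmax : ∀ k, c k < d k → k ≤ i) (hcj : c j = c i) (hji : j ≤ i) :
    Realizable rl ru (Function.update c j (c j + 1)) (d ∘ Equiv.swap j i) := by
  have hswap : Realizable rl ru c (d ∘ Equiv.swap j i) := by
    have hcswap : c ∘ Equiv.swap j i = c := funext (Equiv.apply_swap_eq_self hcj)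
    simpa only [hcswap] using h.comp_perm (Equiv.swap j i)
  refine hswap.update_add_one hnot (by simpa [hcj] using hi) fun k hk => hcj.trans_le (hc ?_)
  obtain rfl | hkj := eq_or_ne k j
  · exact hji
  obtain rfl | hki := eq_or_ne k i
  · exact le_rfl
  exact hmax k (by simpa [Equiv.swap_apply_of_ne_of_ne hkj hki] using hk)

end Realizations

lemma antitone_update_add_one {α β : Type*} [PartialOrder α] [DecidableEq α] [PartialOrder β]
    [Add β] [One β] [SuccAddOrder β] {f : α → β} (hf : Antitone f) {a : α}
    (ha : ∀ x, f x = f a → a ≤ x) : Antitone (Function.update f a (f a + 1)) := by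
  intro x y hxy
  obtain rfl | hxa := eq_or_ne x a
  · rw [Function.update_self, ← Order.succ_eq_add_one]
    obtain rfl | hyx := eq_or_ne y x
    · rw [Function.update_self, Order.succ_eq_add_one]
    · exact Function.update_of_ne hyx _ f ▸ (hf hxy).trans (Order.le_succ _)
  obtain rfl | hya := eq_or_ne y a
  · have hlt : f y < f x := (hf hxy).lt_of_ne fun h => hxa (hxy.antisymm (ha x h.symm))
    simpa [hxa] using Order.add_one_le_of_lt hlt
  · simpa [hxa, hya] using hf hxy

theorem increment_lemma_general {rl ru : Fin n₁ → ℕ} {c cu : Fin n₂ → ℕ} (hc : Antitone c)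
    (hreal : Realizable rl ru c cu) (hnot : ¬ Realizable rl ru c c) :
    ∃ i : Fin n₂, c i < cu i ∧ (∀ k, c k < cu k → k ≤ i) ∧
      ∀ j : Fin n₂, (c j = c i ∧ ∀ k, c k = c i → j ≤ k) →
        Antitone (fun k => if k = j then c k + 1 else c k) ∧
        (fun k => if k = j then c k + 1 else c k) ≤
          (fun k => if k = j then cu i else if k = i then cu j else cu k) ∧
        Realizable rl ru (fun k => if k = j then c k + 1 else c k)
          (fun k => if k = j then cu i else if k = i then cu j else cu k) := by
  obtain ⟨i, hi, hmax⟩ :=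
    {k | c k < cu k}.exists_max_image id (Set.toFinite _) (hreal.exists_lt hnot)
  refine ⟨i, hi, hmax, fun j ⟨hcj, hleft⟩ => ?_⟩
  have hlower : (fun k => if k = j then c k + 1 else c k) = Function.update c j (c j + 1) := by
    grind [Function.update_apply]
  have hupper : (fun k => if k = j then cu i else if k = i then cu j else cu k) =
      cu ∘ Equiv.swap j i := by
    grind
  rw [hlower, hupper]
  have hinc := hreal.increment_swap hc hnot hi hmax hcj (hleft i rfl)
  exact ⟨antitone_update_add_one hc fun k hk => hleft k (hk.trans hcj), hinc.le, hinc⟩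

/-- Incrementation lemma (Lemma 3). -/
theorem increment_lemma {n₁ n₂ : ℕ} (rl ru : Fin n₁ → ℕ) (c cu : Fin n₂ → ℕ)
    (hrl : Antitone rl) (hc : Antitone c) (hr : rl ≤ ru) (hcu : c ≤ cu)
    (hreal : Realizable rl ru c cu) (hnot : ¬ Realizable rl ru c c) :
    ∃ i : Fin n₂, c i < cu i ∧ (∀ k, c k < cu k → k ≤ i) ∧
      ∀ j : Fin n₂, (c j = c i ∧ ∀ k, c k = c i → j ≤ k) →
        Antitone (fun k => if k = j then c k + 1 else c k) ∧
        (fun k => if k = j then c k + 1 else c k) ≤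
          (fun k => if k = j then cu i else if k = i then cu j else cu k) ∧
        Realizable rl ru (fun k => if k = j then c k + 1 else c k)
          (fun k => if k = j then cu i else if k = i then cu j else cu k) := by
  exact increment_lemma_general hc hreal hnot
end
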